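/- Let T > 0 and let p, q ∈ C¹([0,∞); ℝ). Then there exists a function w : Π^T → ℂ², Π^T := {(x,t) : x ≥ 0, 0 ≤ t ≤ T}, such that w(x,t) = 0 whenever t < x, the restriction of w to Δ^T := {(x,t) : 0 ≤ x ≤ t ≤ T} is C¹, and w₁(0,t) = 0 for all t ∈ [0,T], with the following property: for every f ∈ C¹([0,T]; ℂ) with f(0) = f′(0) = 0, the function u^f(x,t) := f(t−x)·(1,i)ᵀ + ∫_x^t f(t−s) w(x,s) ds (with f extended by zero to negative arguments) is the unique C¹ function on Π^T satisfying i ∂u/∂t + J ∂u/∂x + V(x) u = 0 on Π^T, u(x,0) = 0 for x ≥ 0, and u₁(0,t) = f(t) for 0 ≤ t ≤ T; moreover u^f(x,t) = 0 whenever t < x. -/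

import Mathlib

/-!
In the basis `(1, i)`, `(1, -i)` of eigenvectors of `J` a field `u` has amplitudes
`α = (u₁ - i u₂) / 2`, `β = (u₁ + i u₂) / 2`, and with `c = p + iq` the Dirac equation becomes
`(∂ₜ + ∂ₓ) α = i c̄ β`, `(∂ₜ - ∂ₓ) β = i c α` (`dirac_algebra`). In the characteristic coordinates
`ξ = t + x`, `η = t - x` this reads `∂α/∂ξ = (i/2) c̄ β`, `∂β/∂η = (i/2) c α`, with `c` evaluated
at `x = (ξ - η) / 2`; `p` and `q` are first extended to `C¹` functions on `ℝ`.

*Kernel.* The amplitudes `(a, b)` of `w` solve the Goursat problem for this system with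
`b(ξ, 0) = (i/2) c(ξ/2)` on the wave front and `a = -b` on the boundary `ξ = η`. The corresponding
Volterra system of integral equations is solved on all of `ℝ²` by a Neumann series
(`exists_continuous_goursat`). The equations themselves give continuity of `∂a/∂ξ` and `∂b/∂η`;
since `c` is `C¹`, the integral equations can also be differentiated in the other variable, so the
kernel is `C¹` (`exists_goursat`).

*Duhamel.* A control `f` with `f(0) = f'(0) = 0` extends by zero to a `C¹` function `F`, and the
representation `u^f` has amplitudes `F(η) + ∫₀^η F(r) a(ξ - r, η - r) dr` and
`∫₀^η F(r) b(ξ - r, η - r) dr`. Differentiating under the integral sign, the value of `b` on the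
wave front produces exactly the source term of the leading term `F(η)` (`duhamel`), and the two
integrals cancel in the first component at `x = 0`.

*Uniqueness.* The amplitudes of a difference of two solutions solve the homogeneous system with
zero initial data and `α = -β` at `x = 0`. On the bounded set `x + t ≤ R`, integration along
characteristics bounds the supremum `N` of `e^{-Lt} max(|α|, |β|)` by `(C/L) N` with `C = max |c|`,
so `N = 0` for `L > C` (`transport_unique`).
-/

open MeasureTheory Set

noncomputable section

/-- The matrix `J = [[0,1],[-1,0]]`. -/
def Jmat : Matrix (Fin 2) (Fin 2) ℂ := !![0, 1; -1, 0]

/-- The potential matrix `V(x) = [[p x, q x],[q x, -p x]]`. -/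
def Vmat (p q : ℝ → ℝ) (x : ℝ) : Matrix (Fin 2) (Fin 2) ℂ :=
  !![(p x : ℂ), (q x : ℂ); (q x : ℂ), -(p x : ℂ)]

/-- The domain `Π^T = {(x,t) : x ≥ 0, 0 ≤ t ≤ T}`. -/
def PiT (T : ℝ) : Set (ℝ × ℝ) := {z | 0 ≤ z.1 ∧ 0 ≤ z.2 ∧ z.2 ≤ T}

/-- The domain `Δ^T = {(x,t) : 0 ≤ x ≤ t ≤ T}`. -/
def DeltaT (T : ℝ) : Set (ℝ × ℝ) := {z | 0 ≤ z.1 ∧ z.1 ≤ z.2 ∧ z.2 ≤ T}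

/-- The Dirac equation `i ∂u/∂t + J ∂u/∂x + V u = 0` holding at every point of `D`,
partial derivatives being taken within `D`. -/
def DiracOn (p q : ℝ → ℝ) (D : Set (ℝ × ℝ)) (u : ℝ × ℝ → Fin 2 → ℂ) : Prop :=
  ∀ z ∈ D,
    Complex.I • (fderivWithin ℝ u D z ((0 : ℝ), (1 : ℝ)))
      + Jmat.mulVec (fderivWithin ℝ u D z ((1 : ℝ), (0 : ℝ)))
      + (Vmat p q z.1).mulVec (u z) = 0

/-- The Duhamel-type representation
`u^f(x,t) = f(t-x)·(1,i)ᵀ + ∫_x^t f(t-s) w(x,s) ds`. -/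
def usol (f : ℝ → ℂ) (w : ℝ × ℝ → Fin 2 → ℂ) (z : ℝ × ℝ) : Fin 2 → ℂ :=
  f (z.2 - z.1) • ![1, Complex.I] + ∫ s in z.1..z.2, f (z.2 - s) • w (z.1, s)

section Auxiliary

open Complex ComplexConjugate

/-! ### Calculus of parametric integrals -/

/-- Continuity of an integral depending on a parameter, with both limits varying. -/
lemma continuous_param_integral {X : Type*} [TopologicalSpace X] [FirstCountableTopology X]
    {f : X → ℝ → ℂ} (hf : Continuous f.uncurry) {s t : X → ℝ} (hs : Continuous s)
    (ht : Continuous t) : Continuous fun x => ∫ r in s x..t x, f x r := by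
  have hi : ∀ x u v, IntervalIntegrable (f x) volume u v := fun x u v =>
    (hf.comp (Continuous.prodMk_right x)).intervalIntegrable u v
  have h : (fun x => ∫ r in s x..t x, f x r)
      = fun x => (∫ r in (0 : ℝ)..t x, f x r) - ∫ r in (0 : ℝ)..s x, f x r := by
    funext x
    exact (intervalIntegral.integral_interval_sub_left (hi x _ _) (hi x _ _)).symm
  rw [h]
  exact (intervalIntegral.continuous_parametric_intervalIntegral_of_continuous hf ht).sub
    (intervalIntegral.continuous_parametric_intervalIntegral_of_continuous hf hs)

/-- Differentiation under the integral sign. -/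
lemma hasDerivAt_param_integral {f f' : ℝ → ℝ → ℂ} (hf : Continuous f.uncurry)
    (hf' : Continuous f'.uncurry) (hd : ∀ x r, HasDerivAt (fun y => f y r) (f' x r) x)
    (a b x : ℝ) :
    HasDerivAt (fun y => ∫ r in a..b, f y r) (∫ r in a..b, f' x r) x := by
  obtain ⟨C, hC⟩ := ((isCompact_closedBall x 1).prod
    (isCompact_uIcc (a := a) (b := b))).exists_bound_of_continuousOn hf'.continuousOn
  refine (intervalIntegral.hasDerivAt_integral_of_dominated_loc_of_deriv_le (𝕜 := ℝ) (F := f)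
    (F' := f') (bound := fun _ => C) (Metric.closedBall_mem_nhds x one_pos)
    (Filter.Eventually.of_forall fun y => ?_) ?_ ?_ ?_ ?_ ?_).2
  · exact (hf.comp (Continuous.prodMk_right y)).aestronglyMeasurable
  · exact (hf.comp (Continuous.prodMk_right x)).intervalIntegrable _ _
  · exact (hf'.comp (Continuous.prodMk_right x)).aestronglyMeasurable
  · exact Filter.Eventually.of_forall fun r hr y hy => hC (y, r) ⟨hy, uIoc_subset_uIcc hr⟩
  · exact intervalIntegrable_const
  · exact Filter.Eventually.of_forall fun r hr y hy => hd y r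

/-- A function of two real variables with continuous partial derivatives is `C¹`. -/
lemma contDiff_of_partials {g g₁ g₂ : ℝ → ℝ → ℂ}
    (h₁ : ∀ x y, HasDerivAt (fun x' => g x' y) (g₁ x y) x)
    (h₂ : ∀ x y, HasDerivAt (fun y' => g x y') (g₂ x y) y)
    (c₁ : Continuous fun z : ℝ × ℝ => g₁ z.1 z.2) (c₂ : Continuous fun z : ℝ × ℝ => g₂ z.1 z.2) :
    ContDiff ℝ 1 (fun z : ℝ × ℝ => g z.1 z.2) ∧
      ∀ z : ℝ × ℝ, HasFDerivAt (fun z : ℝ × ℝ => g z.1 z.2)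
        ((ContinuousLinearMap.toSpanSingleton ℝ (g₁ z.1 z.2)).coprod
          (ContinuousLinearMap.toSpanSingleton ℝ (g₂ z.1 z.2))) z := by
  have hc : Continuous fun v : ℂ => ContinuousLinearMap.toSpanSingleton ℝ v :=
    (ContinuousLinearMap.toSpanSingletonCLE (𝕜 := ℝ) (E := ℂ)).continuous
  have key : ∀ z : ℝ × ℝ, HasFDerivAt (fun z : ℝ × ℝ => g z.1 z.2)
        ((ContinuousLinearMap.toSpanSingleton ℝ (g₁ z.1 z.2)).coprod
          (ContinuousLinearMap.toSpanSingleton ℝ (g₂ z.1 z.2))) z := by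
    intro z
    exact (hasStrictFDerivAt_uncurry_coprod (u := z) (f := g)
      (f₁ := fun x y => ContinuousLinearMap.toSpanSingleton ℝ (g₁ x y))
      (f₂ := fun x y => ContinuousLinearMap.toSpanSingleton ℝ (g₂ x y))
      (Filter.Eventually.of_forall fun v => h₁ v.1 v.2)
      (Filter.Eventually.of_forall fun v => h₂ v.1 v.2)
      (hc.comp c₁).continuousAt (hc.comp c₂).continuousAt).hasFDerivAt
  refine ⟨?_, key⟩
  rw [contDiff_one_iff_fderiv]
  refine ⟨fun z => (key z).differentiableAt, ?_⟩
  have : fderiv ℝ (fun z : ℝ × ℝ => g z.1 z.2) = fun z =>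
      (ContinuousLinearMap.toSpanSingleton ℝ (g₁ z.1 z.2)).coprod
          (ContinuousLinearMap.toSpanSingleton ℝ (g₂ z.1 z.2)) := funext fun z => (key z).fderiv
  rw [this]
  exact (ContinuousLinearMap.coprodEquivL ℝ).continuous.comp
    ((hc.comp c₁).prodMk (hc.comp c₂))

/-- Leibniz' rule for an integral whose upper limit is the parameter. -/
lemma hasDerivAt_leibniz {f f' : ℝ → ℝ → ℂ} (hf : Continuous f.uncurry)
    (hf' : Continuous f'.uncurry) (hd : ∀ x r, HasDerivAt (fun y => f y r) (f' x r) x) (x : ℝ) :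
    HasDerivAt (fun y => ∫ r in (0 : ℝ)..y, f y r) (f x x + ∫ r in (0 : ℝ)..x, f' x r) x := by
  have h := (contDiff_of_partials (g := fun y h => ∫ r in (0 : ℝ)..h, f y r)
    (g₁ := fun y h => ∫ r in (0 : ℝ)..h, f' y r) (g₂ := f)
    (fun y h => hasDerivAt_param_integral hf hf' hd 0 h y)
    (fun y h => ((hf.comp (Continuous.prodMk_right y)).integral_hasStrictDerivAt 0 h).hasDerivAt)
    (intervalIntegral.continuous_parametric_primitive_of_continuous hf') hf).2 (x, x)
  have h2 := HasFDerivAt.comp_hasDerivAt (f := fun y : ℝ => (y, y)) x h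
    ((hasDerivAt_id x).prodMk (hasDerivAt_id x))
  refine h2.congr_deriv ?_
  simp [add_comm]

/-- The antiderivative of `D ∘ ρ`, `ρ` being a retraction onto a convex set `S`, extends a `C¹`
function with derivative `D` on `S` to a `C¹` function on the line. -/
lemma exists_C1_extension {E : Type*} [NormedAddCommGroup E] [NormedSpace ℝ E] [CompleteSpace E]
    {S : Set ℝ} (hS : Convex ℝ S) (hU : UniqueDiffOn ℝ S) (h0 : (0 : ℝ) ∈ S) {ρ : ℝ → ℝ}
    (hρ : Continuous ρ) (hρS : ∀ x, ρ x ∈ S) (hρid : ∀ x ∈ S, ρ x = x) {f : ℝ → E}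
    (hf : ContDiffOn ℝ 1 f S) :
    ∃ F : ℝ → E, ContDiff ℝ 1 F ∧ (∀ x ∈ S, F x = f x) ∧
      F = fun x => f 0 + ∫ s in (0 : ℝ)..x, derivWithin f S (ρ s) := by
  have hD : Continuous fun s => derivWithin f S (ρ s) :=
    (hf.continuousOn_derivWithin hU le_rfl).comp_continuous hρ hρS
  have hder : ∀ x, HasDerivAt (fun x => f 0 + ∫ s in (0 : ℝ)..x, derivWithin f S (ρ s))
      (derivWithin f S (ρ x)) x := fun x =>
    (hD.integral_hasStrictDerivAt 0 x).hasDerivAt.const_add _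
  refine ⟨_, ?_, ?_, rfl⟩
  · rw [contDiff_one_iff_deriv]
    refine ⟨fun x => (hder x).differentiableAt, ?_⟩
    rw [funext fun x => (hder x).deriv]
    exact hD
  · intro x hx
    have hdiff : ∀ y ∈ S, HasDerivWithinAt
        (fun y => (f 0 + ∫ s in (0 : ℝ)..y, derivWithin f S (ρ s)) - f y) 0 S y := by
      intro y hy
      have h1 := (hder y).hasDerivWithinAt (s := S)
      have h2 := (hf.differentiableOn one_ne_zero y hy).hasDerivWithinAt
      have h3 := h1.sub h2
      rw [hρid y hy, sub_self] at h3
      exact h3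
    have := hS.norm_image_sub_le_of_norm_hasDerivWithin_le (C := 0) hdiff (by simp) h0 hx
    simp only [intervalIntegral.integral_same, add_zero, sub_self, sub_zero, zero_mul] at this
    exact sub_eq_zero.1 (norm_le_zero_iff.1 this)

/-! ### The Goursat problem in characteristic coordinates -/

/-- The right-moving amplitude `a` determined by the left-moving amplitude `b`: integration of
`∂a/∂ξ = (i/2) c̄((ξ-η)/2) b` from the diagonal `ξ = η` (that is, `x = 0`), where `a = -b`. -/
def aOp (c : ℝ → ℂ) (b : ℝ → ℝ → ℂ) (ξ η : ℝ) : ℂ :=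
  -b η η + ∫ r in η..ξ, I / 2 * conj (c ((r - η) / 2)) * b r η

/-- Integration of `∂b/∂η = (i/2) c((ξ-η)/2) a` from the characteristic `η = 0`
(that is, `x = t`), with zero data there. -/
def bOp (c : ℝ → ℂ) (a : ℝ → ℝ → ℂ) (ξ η : ℝ) : ℂ :=
  ∫ r in (0 : ℝ)..η, I / 2 * c ((ξ - r) / 2) * a ξ r

/-- The terms of the Neumann series for `b`; the first one carries the data
`b(ξ,0) = (i/2) c(ξ/2)`. -/
def bTerm (c : ℝ → ℂ) : ℕ → ℝ → ℝ → ℂ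
  | 0 => fun ξ _ => I / 2 * c (ξ / 2)
  | n + 1 => bOp c (aOp c (bTerm c n))

lemma continuous_aOp {c : ℝ → ℂ} (hc : Continuous c) {b : ℝ → ℝ → ℂ}
    (hb : Continuous b.uncurry) : Continuous (aOp c b).uncurry := by
  have h1 : Continuous fun z : ℝ × ℝ => b z.2 z.2 :=
    hb.comp (continuous_snd.prodMk continuous_snd)
  have h2 : Continuous (fun (z : ℝ × ℝ) (r : ℝ) =>
      I / 2 * conj (c ((r - z.2) / 2)) * b r z.2).uncurry := by
    have : Continuous fun y : (ℝ × ℝ) × ℝ => b y.2 y.1.2 :=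
      hb.comp (continuous_snd.prodMk (continuous_snd.comp continuous_fst))
    have h3 : Continuous fun y : (ℝ × ℝ) × ℝ => conj (c ((y.2 - y.1.2) / 2)) :=
      Complex.continuous_conj.comp (hc.comp (by fun_prop))
    exact (continuous_const.mul h3).mul this
  exact h1.neg.add (continuous_param_integral h2 continuous_snd continuous_fst)

lemma continuous_bOp {c : ℝ → ℂ} (hc : Continuous c) {a : ℝ → ℝ → ℂ}
    (ha : Continuous a.uncurry) : Continuous (bOp c a).uncurry := by
  have h2 : Continuous (fun (z : ℝ × ℝ) (r : ℝ) =>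
      I / 2 * c ((z.1 - r) / 2) * a z.1 r).uncurry := by
    have : Continuous fun y : (ℝ × ℝ) × ℝ => a y.1.1 y.2 :=
      ha.comp ((continuous_fst.comp continuous_fst).prodMk continuous_snd)
    have h3 : Continuous fun y : (ℝ × ℝ) × ℝ => c ((y.1.1 - y.2) / 2) :=
      hc.comp (by fun_prop)
    exact (continuous_const.mul h3).mul this
  exact continuous_param_integral h2 continuous_const continuous_snd

lemma continuous_bTerm {c : ℝ → ℂ} (hc : Continuous c) (n : ℕ) :
    Continuous (bTerm c n).uncurry := by
  induction n with
  | zero =>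
    have : Continuous fun z : ℝ × ℝ => c (z.1 / 2) := hc.comp (by fun_prop)
    exact continuous_const.mul this
  | succ n ih => exact continuous_bOp hc (continuous_aOp hc ih)

lemma norm_half_I_mul (u v : ℂ) : ‖I / 2 * u * v‖ = ‖u‖ * ‖v‖ / 2 := by
  simp; ring

/-- A point between two points of modulus at most `R` has modulus at most `R`. -/
lemma abs_le_of_mem_uIoc {R u v r : ℝ} (hu : |u| ≤ R) (hv : |v| ≤ R) (hr : r ∈ uIoc u v) :
    |r| ≤ R := by
  have h1 := abs_le.1 hu
  have h2 := abs_le.1 hv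
  rw [mem_uIoc] at hr
  rw [abs_le]
  rcases hr with h | h <;> constructor <;> linarith

lemma abs_half_sub_le {R u v : ℝ} (hu : |u| ≤ R) (hv : |v| ≤ R) : |(u - v) / 2| ≤ R := by
  rw [abs_le] at *
  constructor <;> linarith

lemma norm_aOp_le {c : ℝ → ℂ} {b : ℝ → ℝ → ℂ} {R C m η ξ : ℝ}
    (hC : ∀ x, |x| ≤ R → ‖c x‖ ≤ C) (hη : |η| ≤ R) (hξ : |ξ| ≤ R)
    (hb : ∀ r, |r| ≤ R → ‖b r η‖ ≤ m) : ‖aOp c b ξ η‖ ≤ (1 + R * C) * m := by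
  have hC0 : 0 ≤ C := (norm_nonneg _).trans (hC η hη)
  have hm0 : 0 ≤ m := (norm_nonneg _).trans (hb η hη)
  have h1 : ‖∫ r in η..ξ, I / 2 * conj (c ((r - η) / 2)) * b r η‖ ≤ C * m / 2 * |ξ - η| := by
    refine intervalIntegral.norm_integral_le_of_norm_le_const fun r hr => ?_
    have hr' := abs_le_of_mem_uIoc hη hξ hr
    rw [norm_half_I_mul, RCLike.norm_conj]
    have := mul_le_mul (hC _ (abs_half_sub_le hr' hη)) (hb r hr') (norm_nonneg _) hC0
    linarith
  have h2 : |ξ - η| ≤ 2 * R := by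
    have := abs_sub ξ η
    linarith
  have h3 : C * m / 2 * |ξ - η| ≤ C * m / 2 * (2 * R) := by gcongr
  calc ‖aOp c b ξ η‖ ≤ ‖-b η η‖ + ‖∫ r in η..ξ, I / 2 * conj (c ((r - η) / 2)) * b r η‖ :=
        norm_add_le _ _
    _ ≤ m + C * m / 2 * (2 * R) := by
        rw [norm_neg]
        exact add_le_add (hb η hη) (h1.trans h3)
    _ = (1 + R * C) * m := by ring

lemma norm_bOp_le {c : ℝ → ℂ} {a : ℝ → ℝ → ℂ} {R C m η ξ : ℝ} {n : ℕ}
    (hC : ∀ x, |x| ≤ R → ‖c x‖ ≤ C) (hη : |η| ≤ R) (hξ : |ξ| ≤ R)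
    (ha : ∀ r, |r| ≤ R → ‖a ξ r‖ ≤ m * |r| ^ n) :
    ‖bOp c a ξ η‖ ≤ C * m * (|η| ^ (n + 1) / (n + 1)) := by
  have hR : 0 ≤ R := (abs_nonneg _).trans hη
  have hC0 : 0 ≤ C := (norm_nonneg _).trans (hC η hη)
  have hint : ∫ r in uIoc 0 η, C * m * |r| ^ n = C * m * (|η| ^ (n + 1) / (n + 1)) := by
    rw [integral_const_mul]
    have := integral_pow_abs_sub_uIoc (a := 0) (b := η) (n := n)
    simp only [sub_zero] at this
    rw [this]
  rw [bOp, ← hint]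
  refine (intervalIntegral.norm_integral_le_integral_norm_uIoc).trans ?_
  refine integral_mono_of_nonneg (Filter.Eventually.of_forall fun r => norm_nonneg _) ?_ ?_
  · have : Continuous fun r : ℝ => C * m * |r| ^ n := by fun_prop
    exact (intervalIntegrable_iff.1 (this.intervalIntegrable 0 η))
  · refine (ae_restrict_iff' measurableSet_uIoc).2 (Filter.Eventually.of_forall fun r hr => ?_)
    have hr' := abs_le_of_mem_uIoc (by simpa using hR) hη hr
    have hm := (norm_nonneg _).trans (ha r hr')
    dsimp only
    rw [norm_half_I_mul]
    have h := mul_le_mul (hC _ (abs_half_sub_le hξ hr')) (ha r hr') (norm_nonneg _) hC0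
    have := mul_nonneg hC0 hm
    linarith

/-- The Volterra estimate: on the box `|ξ|, |η| ≤ R` the Neumann series is dominated by an
exponential series. -/
lemma norm_bTerm_le {c : ℝ → ℂ} {R C : ℝ} (hR : 0 ≤ R)
    (hC : ∀ x, |x| ≤ R → ‖c x‖ ≤ C) (n : ℕ) : ∀ ξ η, |ξ| ≤ R → |η| ≤ R →
    ‖bTerm c n ξ η‖ ≤ C * (C * (1 + R * C)) ^ n / n.factorial * |η| ^ n := by
  have hC0 : 0 ≤ C := (norm_nonneg _).trans (hC 0 (by simpa using hR))
  induction n with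
  | zero =>
    intro ξ η hξ hη
    have h := hC (ξ / 2) (by simpa using abs_half_sub_le hξ (by simpa using hR : |(0 : ℝ)| ≤ R))
    simp [bTerm]
    linarith [norm_nonneg (c (ξ / 2))]
  | succ n ih =>
    intro ξ η hξ hη
    refine (norm_bOp_le (m := (1 + R * C) * (C * (C * (1 + R * C)) ^ n / n.factorial)) (n := n)
      hC hη hξ fun r hr => ?_).trans (le_of_eq ?_)
    · rw [mul_assoc]
      exact norm_aOp_le hC hr hξ fun s hs => ih s r hs hr
    · rw [Nat.factorial_succ]
      push_cast
      field_simp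
      ring

/-- Summable majorant of the Neumann series on a box. -/
lemma exists_bTerm_majorant {c : ℝ → ℂ} (hc : Continuous c) {R : ℝ} (hR : 0 ≤ R) :
    ∃ (C : ℝ) (β : ℕ → ℝ), (∀ x, |x| ≤ R → ‖c x‖ ≤ C) ∧ Summable β ∧
      ∀ n ξ η, |ξ| ≤ R → |η| ≤ R → ‖bTerm c n ξ η‖ ≤ β n := by
  obtain ⟨C, hC⟩ := (isCompact_Icc (a := -R) (b := R)).exists_bound_of_continuousOn hc.continuousOn
  have hC' : ∀ x, |x| ≤ R → ‖c x‖ ≤ C := fun x hx => hC x (abs_le.1 hx)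
  have hC0 : 0 ≤ C := (norm_nonneg _).trans (hC' 0 (by simpa using hR))
  refine ⟨C, fun n => C * ((C * (1 + R * C) * R) ^ n / n.factorial), hC',
    (Real.summable_pow_div_factorial _).mul_left C, fun n ξ η hξ hη => ?_⟩
  refine (norm_bTerm_le hR hC' n ξ η hξ hη).trans ?_
  calc C * (C * (1 + R * C)) ^ n / n.factorial * |η| ^ n
      ≤ C * (C * (1 + R * C)) ^ n / n.factorial * R ^ n := by gcongr
    _ = C * ((C * (1 + R * C) * R) ^ n / n.factorial) := by rw [mul_pow _ R]; ring

/-- Termwise integration of a series with a summable majorant. -/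
lemma hasSum_integral_of_majorant {G : ℕ → ℝ → ℂ} {g : ℝ → ℂ} {u v : ℝ} {β : ℕ → ℝ}
    (hG : ∀ n, Continuous (G n)) (hβ : Summable β) (hb : ∀ n, ∀ r ∈ uIoc u v, ‖G n r‖ ≤ β n)
    (hs : ∀ r ∈ uIoc u v, HasSum (fun n => G n r) (g r)) :
    HasSum (fun n => ∫ r in u..v, G n r) (∫ r in u..v, g r) :=
  intervalIntegral.hasSum_integral_of_dominated_convergence (fun n _ => β n)
    (fun n => (hG n).aestronglyMeasurable)
    (fun n => Filter.Eventually.of_forall (hb n))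
    (Filter.Eventually.of_forall fun _ _ => hβ) intervalIntegrable_const
    (Filter.Eventually.of_forall hs)

/-- The Goursat integral equations have a continuous solution on the whole plane. -/
lemma exists_continuous_goursat {c : ℝ → ℂ} (hc : Continuous c) :
    ∃ b : ℝ → ℝ → ℂ, Continuous b.uncurry ∧
      ∀ ξ η, b ξ η = I / 2 * c (ξ / 2) + bOp c (aOp c b) ξ η := by
  have hsum : ∀ ξ η, HasSum (fun n => bTerm c n ξ η) (∑' n, bTerm c n ξ η) := by
    intro ξ η
    obtain ⟨C, β, -, hβ, hb⟩ := exists_bTerm_majorant hc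
      ((abs_nonneg ξ).trans (le_max_left |ξ| |η|))
    exact (Summable.of_norm_bounded hβ
      fun n => hb n ξ η (le_max_left _ _) (le_max_right _ _)).hasSum
  refine ⟨fun ξ η => ∑' n, bTerm c n ξ η, ?_, ?_⟩
  · rw [continuous_iff_continuousAt]
    rintro ⟨ξ, η⟩
    obtain ⟨C, β, -, hβ, hb⟩ := exists_bTerm_majorant hc
      (by positivity : 0 ≤ |ξ| + |η| + 1)
    have hon : ContinuousOn (Function.uncurry fun ξ η => ∑' n, bTerm c n ξ η)
        (Metric.closedBall 0 (|ξ| + |η| + 1)) := by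
      refine continuousOn_tsum (fun n => (continuous_bTerm hc n).continuousOn) hβ ?_
      rintro n ⟨x, y⟩ hz
      rw [mem_closedBall_zero_iff, Prod.norm_def, max_le_iff] at hz
      exact hb n x y hz.1 hz.2
    refine hon.continuousAt (Metric.closedBall_mem_nhds_of_mem ?_)
    rw [mem_ball_zero_iff, Prod.norm_def, max_lt_iff]
    simp only [Real.norm_eq_abs]
    constructor <;> linarith [abs_nonneg ξ, abs_nonneg η]
  · intro ξ η
    set R := max |ξ| |η| with hRdef
    have hξ : |ξ| ≤ R := le_max_left _ _
    have hη : |η| ≤ R := le_max_right _ _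
    have hR : 0 ≤ R := (abs_nonneg ξ).trans hξ
    obtain ⟨C, β, hC, hβ, hb⟩ := exists_bTerm_majorant hc hR
    have hC0 : 0 ≤ C := (norm_nonneg _).trans (hC ξ hξ)
    have hβ0 : ∀ n, 0 ≤ β n := fun n => (norm_nonneg _).trans (hb n ξ η hξ hη)
    have ha : ∀ s, |s| ≤ R → HasSum (fun n => aOp c (bTerm c n) ξ s)
        (aOp c (fun ξ η => ∑' n, bTerm c n ξ η) ξ s) := by
      intro s hs
      refine (hsum s s).neg.add ?_
      refine hasSum_integral_of_majorant (β := fun n => C * β n) (fun n => ?_) (hβ.mul_left C)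
        (fun n r hr => ?_) (fun r hr => (hsum r s).mul_left _)
      · have h1 : Continuous fun r => bTerm c n r s :=
          (continuous_bTerm hc n).comp (continuous_id.prodMk continuous_const)
        have h2 : Continuous fun r : ℝ => conj (c ((r - s) / 2)) :=
          Complex.continuous_conj.comp (hc.comp (by fun_prop))
        exact (continuous_const.mul h2).mul h1
      · have hr' := abs_le_of_mem_uIoc hs hξ hr
        rw [norm_half_I_mul, RCLike.norm_conj]
        have := mul_le_mul (hC _ (abs_half_sub_le hr' hs)) (hb n r s hr' hs) (norm_nonneg _) hC0
        have := mul_nonneg hC0 (hβ0 n)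
        linarith
    have hB : HasSum (fun n => bTerm c (n + 1) ξ η)
        (bOp c (aOp c (fun ξ η => ∑' n, bTerm c n ξ η)) ξ η) := by
      have h0 : |(0 : ℝ)| ≤ R := by simpa using hR
      refine hasSum_integral_of_majorant (β := fun n => C * ((1 + R * C) * β n)) (fun n => ?_)
        ((hβ.mul_left _).mul_left C) (fun n r hr => ?_)
        (fun r hr => (ha r (abs_le_of_mem_uIoc h0 hη hr)).mul_left _)
      · have h1 : Continuous fun r => aOp c (bTerm c n) ξ r :=
          (continuous_aOp hc (continuous_bTerm hc n)).comp (continuous_const.prodMk continuous_id)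
        have h2 : Continuous fun r : ℝ => c ((ξ - r) / 2) := hc.comp (by fun_prop)
        exact (continuous_const.mul h2).mul h1
      · have hr' := abs_le_of_mem_uIoc h0 hη hr
        rw [norm_half_I_mul]
        have h1 := norm_aOp_le (b := bTerm c n) hC hr' hξ fun s hs => hb n s r hs hr'
        have h2 := mul_le_mul (hC _ (abs_half_sub_le hξ hr')) h1 (norm_nonneg _) hC0
        have := mul_nonneg hC0 ((norm_nonneg _).trans h1)
        linarith
    dsimp only
    rw [(hsum ξ η).summable.tsum_eq_zero_add, hB.tsum_eq]
    rfl

set_option maxHeartbeats 1600000 in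
/-- For `C¹` coefficients the Goursat problem has a `C¹` solution. A continuous solution of the
integral equations suffices: `∂a/∂ξ` and `∂b/∂η` are continuous by the fundamental theorem of
calculus, which makes the integral equations differentiable in the remaining variable. -/
lemma exists_goursat {c : ℝ → ℂ} (hc : ContDiff ℝ 1 c) :
    ∃ a b : ℝ → ℝ → ℂ,
      ContDiff ℝ 1 (fun z : ℝ × ℝ => a z.1 z.2) ∧ ContDiff ℝ 1 (fun z : ℝ × ℝ => b z.1 z.2) ∧
      (∀ ξ η, HasDerivAt (fun x => a x η) (I / 2 * conj (c ((ξ - η) / 2)) * b ξ η) ξ) ∧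
      (∀ ξ η, HasDerivAt (fun y => b ξ y) (I / 2 * c ((ξ - η) / 2) * a ξ η) η) ∧
      (∀ η, a η η = -b η η) ∧ ∀ ξ, b ξ 0 = I / 2 * c (ξ / 2) := by
  have hcc := hc.continuous
  have hc'c : Continuous (deriv c) := hc.continuous_deriv le_rfl
  have hder : ∀ x, HasDerivAt c (deriv c x) x := fun x =>
    (hc.differentiable one_ne_zero x).hasDerivAt
  have hconj : ∀ x, HasDerivAt (fun x => conj (c x)) (conj (deriv c x)) x := fun x =>
    (conjCLE : ℂ →L[ℝ] ℂ).hasFDerivAt.comp_hasDerivAt x (hder x)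
  obtain ⟨b, hb, hbeq⟩ := exists_continuous_goursat hcc
  have ha := continuous_aOp hcc hb
  set a := aOp c b with ha_def
  have ha1 : ∀ ξ η, HasDerivAt (fun x => a x η) (I / 2 * conj (c ((ξ - η) / 2)) * b ξ η) ξ := by
    intro ξ η
    have h1 : Continuous fun r => b r η := hb.comp (continuous_id.prodMk continuous_const)
    have h2 : Continuous fun r : ℝ => conj (c ((r - η) / 2)) :=
      Complex.continuous_conj.comp (hcc.comp (by fun_prop))
    exact (((continuous_const.mul h2).mul h1).integral_hasStrictDerivAt η ξ).hasDerivAt.const_add _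
  have hb2 : ∀ ξ η, HasDerivAt (fun y => b ξ y) (I / 2 * c ((ξ - η) / 2) * a ξ η) η := by
    intro ξ η
    have h1 : Continuous fun r => a ξ r := ha.comp (continuous_const.prodMk continuous_id)
    have h2 : Continuous fun r : ℝ => c ((ξ - r) / 2) := hcc.comp (by fun_prop)
    rw [funext (hbeq ξ)]
    exact (((continuous_const.mul h2).mul h1).integral_hasStrictDerivAt 0 η).hasDerivAt.const_add _
  have ha1c : Continuous fun z : ℝ × ℝ => I / 2 * conj (c ((z.1 - z.2) / 2)) * b z.1 z.2 := by
    have h2 : Continuous fun z : ℝ × ℝ => conj (c ((z.1 - z.2) / 2)) :=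
      Complex.continuous_conj.comp (hcc.comp (by fun_prop))
    exact (continuous_const.mul h2).mul hb
  have hb2c : Continuous fun z : ℝ × ℝ => I / 2 * c ((z.1 - z.2) / 2) * a z.1 z.2 := by
    have h2 : Continuous fun z : ℝ × ℝ => c ((z.1 - z.2) / 2) := hcc.comp (by fun_prop)
    exact (continuous_const.mul h2).mul ha
  have hkb : Continuous (fun x r : ℝ => I / 2 * c ((x - r) / 2) * a x r).uncurry := hb2c
  have hkb' : Continuous (fun x r : ℝ => I / 2 * (deriv c ((x - r) / 2) * (1 / 2)) * a x r
      + I / 2 * c ((x - r) / 2) * (I / 2 * conj (c ((x - r) / 2)) * b x r)).uncurry := by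
    have h2 : Continuous fun z : ℝ × ℝ => c ((z.1 - z.2) / 2) := hcc.comp (by fun_prop)
    have h3 : Continuous fun z : ℝ × ℝ => deriv c ((z.1 - z.2) / 2) := hc'c.comp (by fun_prop)
    exact ((continuous_const.mul (h3.mul continuous_const)).mul ha).add
      ((continuous_const.mul h2).mul ha1c)
  have hb1 : ∀ ξ η, HasDerivAt (fun x => b x η) (I / 2 * (deriv c (ξ / 2) * (1 / 2)) +
      ∫ r in (0 : ℝ)..η, (I / 2 * (deriv c ((ξ - r) / 2) * (1 / 2)) * a ξ r
      + I / 2 * c ((ξ - r) / 2) * (I / 2 * conj (c ((ξ - r) / 2)) * b ξ r))) ξ := by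
    intro ξ η
    have hd : ∀ x r : ℝ, HasDerivAt (fun y => I / 2 * c ((y - r) / 2) * a y r)
        (I / 2 * (deriv c ((x - r) / 2) * (1 / 2)) * a x r
        + I / 2 * c ((x - r) / 2) * (I / 2 * conj (c ((x - r) / 2)) * b x r)) x := by
      intro x r
      have h1 : HasDerivAt (fun y : ℝ => (y - r) / 2) (1 / 2) x :=
        ((hasDerivAt_id x).sub_const r).div_const 2
      have h2 := (hder ((x - r) / 2)).scomp x h1
      refine (((h2.const_mul (I / 2)).mul (ha1 x r))).congr_deriv ?_
      simp [mul_comm]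
    have h1 : HasDerivAt (fun x => I / 2 * c (x / 2)) (I / 2 * (deriv c (ξ / 2) * (1 / 2))) ξ := by
      refine (((hder (ξ / 2)).scomp ξ ((hasDerivAt_id ξ).div_const 2)).const_mul
        (I / 2)).congr_deriv ?_
      simp [mul_comm]
    rw [show (fun x => b x η) = fun x => I / 2 * c (x / 2) + bOp c a x η from
      funext fun x => hbeq x η]
    exact h1.add (hasDerivAt_param_integral hkb hkb' hd 0 η ξ)
  have hb1c : Continuous fun z : ℝ × ℝ => I / 2 * (deriv c (z.1 / 2) * (1 / 2)) +
      ∫ r in (0 : ℝ)..z.2, (I / 2 * (deriv c ((z.1 - r) / 2) * (1 / 2)) * a z.1 r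
      + I / 2 * c ((z.1 - r) / 2) * (I / 2 * conj (c ((z.1 - r) / 2)) * b z.1 r)) := by
    have h1 : Continuous fun z : ℝ × ℝ => deriv c (z.1 / 2) := hc'c.comp (by fun_prop)
    exact (continuous_const.mul (h1.mul continuous_const)).add
      (intervalIntegral.continuous_parametric_primitive_of_continuous hkb')
  obtain ⟨hbC, hbF⟩ := contDiff_of_partials hb1 hb2 hb1c hb2c
  have hbdiag : ContDiff ℝ 1 fun y : ℝ => b y y :=
    hbC.comp (contDiff_id.prodMk contDiff_id : ContDiff ℝ 1 fun y : ℝ => (y, y))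
  have hka : Continuous (fun y r : ℝ => I / 2 * conj (c ((r - y) / 2)) * b r y).uncurry :=
    ha1c.comp continuous_swap
  have hka' : Continuous (fun y r : ℝ => I / 2 * (conj (deriv c ((r - y) / 2)) * (-1 / 2)) * b r y
      + I / 2 * conj (c ((r - y) / 2)) * (I / 2 * c ((r - y) / 2) * a r y)).uncurry := by
    have h2 : Continuous fun z : ℝ × ℝ => conj (c ((z.2 - z.1) / 2)) :=
      Complex.continuous_conj.comp (hcc.comp (by fun_prop))
    have h3 : Continuous fun z : ℝ × ℝ => conj (deriv c ((z.2 - z.1) / 2)) :=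
      Complex.continuous_conj.comp (hc'c.comp (by fun_prop))
    exact ((continuous_const.mul (h3.mul continuous_const)).mul (hb.comp continuous_swap)).add
      ((continuous_const.mul h2).mul (hb2c.comp continuous_swap))
  have hda : ∀ y r : ℝ, HasDerivAt (fun y => I / 2 * conj (c ((r - y) / 2)) * b r y)
      (I / 2 * (conj (deriv c ((r - y) / 2)) * (-1 / 2)) * b r y
      + I / 2 * conj (c ((r - y) / 2)) * (I / 2 * c ((r - y) / 2) * a r y)) y := by
    intro y r
    have h1 : HasDerivAt (fun y : ℝ => (r - y) / 2) (-1 / 2) y :=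
      ((hasDerivAt_id y).const_sub r).div_const 2
    have h2 := (hconj ((r - y) / 2)).scomp y h1
    refine (((h2.const_mul (I / 2)).mul (hb2 r y))).congr_deriv ?_
    simp [mul_comm]
  have hkai : ∀ y u v, IntervalIntegrable (fun r : ℝ => I / 2 * conj (c ((r - y) / 2)) * b r y)
      volume u v := fun y u v =>
    (hka.comp (Continuous.prodMk_right y)).intervalIntegrable u v
  have ha2 : ∀ ξ η, HasDerivAt (fun y => a ξ y) (-deriv (fun y => b y y) η +
      ((∫ r in (0 : ℝ)..ξ, (I / 2 * (conj (deriv c ((r - η) / 2)) * (-1 / 2)) * b r η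
      + I / 2 * conj (c ((r - η) / 2)) * (I / 2 * c ((r - η) / 2) * a r η)))
      - (I / 2 * conj (c ((η - η) / 2)) * b η η +
      ∫ r in (0 : ℝ)..η, (I / 2 * (conj (deriv c ((r - η) / 2)) * (-1 / 2)) * b r η
      + I / 2 * conj (c ((r - η) / 2)) * (I / 2 * c ((r - η) / 2) * a r η))))) η := by
    intro ξ η
    rw [show (fun y => a ξ y) = fun y => -b y y +
        ((∫ r in (0 : ℝ)..ξ, I / 2 * conj (c ((r - y) / 2)) * b r y)
        - ∫ r in (0 : ℝ)..y, I / 2 * conj (c ((r - y) / 2)) * b r y) from funext fun y => by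
      rw [intervalIntegral.integral_interval_sub_left (hkai y _ _) (hkai y _ _)]
      rfl]
    exact (hbdiag.differentiable one_ne_zero η).hasDerivAt.neg.add
      ((hasDerivAt_param_integral hka hka' hda 0 ξ η).sub (hasDerivAt_leibniz hka hka' hda η))
  refine ⟨a, b, (contDiff_of_partials ha1 ha2 ha1c ?_).1, hbC, ha1, hb2, fun η => ?_, fun ξ => ?_⟩
  · refine ((hbdiag.continuous_deriv le_rfl).comp continuous_snd).neg.add
      (Continuous.sub ?_ (Continuous.add ?_ ?_))
    · exact (intervalIntegral.continuous_parametric_primitive_of_continuous hka').comp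
        continuous_swap
    · exact hka.comp (continuous_snd.prodMk continuous_snd)
    · exact (intervalIntegral.continuous_parametric_primitive_of_continuous hka').comp
        (continuous_snd.prodMk continuous_snd)
  · simp [ha_def, aOp]
  · rw [hbeq]
    simp [bOp]

/-! ### Duhamel's formula in characteristic coordinates -/

lemma exists_partials {g : ℝ → ℝ → ℂ} (hg : ContDiff ℝ 1 fun z : ℝ × ℝ => g z.1 z.2) :
    ∃ g₁ g₂ : ℝ → ℝ → ℂ, (∀ x y, HasDerivAt (fun x' => g x' y) (g₁ x y) x) ∧
      (∀ x y, HasDerivAt (fun y' => g x y') (g₂ x y) y) ∧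
      (Continuous fun z : ℝ × ℝ => g₁ z.1 z.2) ∧ Continuous fun z : ℝ × ℝ => g₂ z.1 z.2 := by
  have hd := hg.differentiable one_ne_zero
  have hc := hg.continuous_fderiv one_ne_zero
  refine ⟨fun x y => fderiv ℝ (fun z : ℝ × ℝ => g z.1 z.2) (x, y) (1, 0),
    fun x y => fderiv ℝ (fun z : ℝ × ℝ => g z.1 z.2) (x, y) (0, 1), fun x y => ?_, fun x y => ?_,
    hc.clm_apply continuous_const, hc.clm_apply continuous_const⟩
  · exact HasFDerivAt.comp_hasDerivAt (f := fun x : ℝ => (x, y)) x (hd (x, y)).hasFDerivAt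
      ((hasDerivAt_id x).prodMk (hasDerivAt_const x y))
  · exact HasFDerivAt.comp_hasDerivAt (f := fun y : ℝ => (x, y)) y (hd (x, y)).hasFDerivAt
      ((hasDerivAt_const y x).prodMk (hasDerivAt_id y))

/-- Convolution in time of a control `F` with a kernel `g`; in the characteristic coordinates
`ξ = t + x`, `η = t - x` a delay by `r` shifts both variables by `r`. -/
def duh (F : ℝ → ℂ) (g : ℝ → ℝ → ℂ) (ξ η : ℝ) : ℂ :=
  ∫ r in (0 : ℝ)..η, F r * g (ξ - r) (η - r)

lemma duh_partials {F : ℝ → ℂ} (hF : Continuous F) {g g₁ g₂ : ℝ → ℝ → ℂ}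
    (h₁ : ∀ x y, HasDerivAt (fun x' => g x' y) (g₁ x y) x)
    (h₂ : ∀ x y, HasDerivAt (fun y' => g x y') (g₂ x y) y)
    (c₁ : Continuous fun z : ℝ × ℝ => g₁ z.1 z.2) (c₂ : Continuous fun z : ℝ × ℝ => g₂ z.1 z.2) :
    ContDiff ℝ 1 (fun z : ℝ × ℝ => duh F g z.1 z.2) ∧
    (∀ ξ η, HasDerivAt (fun x => duh F g x η) (duh F g₁ ξ η) ξ) ∧
    (∀ ξ η, HasDerivAt (fun y => duh F g ξ y) (F η * g (ξ - η) 0 + duh F g₂ ξ η) η) := by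
  have hg := (contDiff_of_partials h₁ h₂ c₁ c₂).1.continuous
  have shift : ∀ {k : ℝ → ℝ → ℂ}, (Continuous fun z : ℝ × ℝ => k z.1 z.2) →
      Continuous (fun (z : ℝ × ℝ) (r : ℝ) => F r * k (z.1 - r) (z.2 - r)).uncurry := by
    intro k hk
    have : Continuous fun y : (ℝ × ℝ) × ℝ => k (y.1.1 - y.2) (y.1.2 - y.2) :=
      hk.comp (f := fun y : (ℝ × ℝ) × ℝ => (y.1.1 - y.2, y.1.2 - y.2)) (by fun_prop)
    exact (hF.comp continuous_snd).mul this
  have hx : ∀ {k : ℝ → ℝ → ℂ} (η : ℝ), (Continuous fun z : ℝ × ℝ => k z.1 z.2) →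
      Continuous (fun (x r : ℝ) => F r * k (x - r) (η - r)).uncurry := fun η hk =>
    (shift hk).comp (f := fun y : ℝ × ℝ => ((y.1, η), y.2)) (by fun_prop)
  have hy : ∀ {k : ℝ → ℝ → ℂ} (ξ : ℝ), (Continuous fun z : ℝ × ℝ => k z.1 z.2) →
      Continuous (fun (y r : ℝ) => F r * k (ξ - r) (y - r)).uncurry := fun ξ hk =>
    (shift hk).comp (f := fun y : ℝ × ℝ => ((ξ, y.1), y.2)) (by fun_prop)
  have k₁ : ∀ ξ η, HasDerivAt (fun x => duh F g x η) (duh F g₁ ξ η) ξ := fun ξ η =>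
    hasDerivAt_param_integral (hx η hg) (hx η c₁)
      (fun x r => ((h₁ (x - r) (η - r)).comp_sub_const x r).const_mul (F r)) 0 η ξ
  have k₂ : ∀ ξ η, HasDerivAt (fun y => duh F g ξ y) (F η * g (ξ - η) 0 + duh F g₂ ξ η) η := by
    intro ξ η
    have := hasDerivAt_leibniz (hy ξ hg) (hy ξ c₂)
      (fun y r => ((h₂ (ξ - r) (y - r)).comp_sub_const y r).const_mul (F r)) η
    rw [sub_self] at this
    exact this
  have cd : ∀ {k : ℝ → ℝ → ℂ}, (Continuous fun z : ℝ × ℝ => k z.1 z.2) →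
      Continuous fun z : ℝ × ℝ => duh F k z.1 z.2 := fun hk =>
    continuous_param_integral (shift hk) continuous_const continuous_snd
  refine ⟨(contDiff_of_partials k₁ k₂ (cd c₁) (Continuous.add ?_ (cd c₂))).1, k₁, k₂⟩
  exact (hF.comp continuous_snd).mul
    (hg.comp (f := fun z : ℝ × ℝ => (z.1 - z.2, (0 : ℝ))) (by fun_prop))

/-- Superposing the Goursat kernel with a control `F` gives a `C¹` solution of the system in
characteristic coordinates: the value `b(ξ,0) = (i/2) c(ξ/2)` accounts for the source term produced
by the wave front `F(η)`. -/
lemma duhamel {c : ℝ → ℂ} {a b : ℝ → ℝ → ℂ}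
    (ha : ContDiff ℝ 1 (fun z : ℝ × ℝ => a z.1 z.2))
    (hb : ContDiff ℝ 1 (fun z : ℝ × ℝ => b z.1 z.2))
    (ha1 : ∀ ξ η, HasDerivAt (fun x => a x η) (I / 2 * conj (c ((ξ - η) / 2)) * b ξ η) ξ)
    (hb2 : ∀ ξ η, HasDerivAt (fun y => b ξ y) (I / 2 * c ((ξ - η) / 2) * a ξ η) η)
    (hb0 : ∀ ξ, b ξ 0 = I / 2 * c (ξ / 2))
    {F : ℝ → ℂ} (hF : ContDiff ℝ 1 F) :
    ContDiff ℝ 1 (fun z : ℝ × ℝ => F z.2 + duh F a z.1 z.2) ∧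
    ContDiff ℝ 1 (fun z : ℝ × ℝ => duh F b z.1 z.2) ∧
    (∀ ξ η, HasDerivAt (fun x => F η + duh F a x η)
      (I / 2 * conj (c ((ξ - η) / 2)) * duh F b ξ η) ξ) ∧
    (∀ ξ η, HasDerivAt (fun y => duh F b ξ y)
      (I / 2 * c ((ξ - η) / 2) * (F η + duh F a ξ η)) η) := by
  obtain ⟨a₁, a₂, ha₁, ha₂, ca₁, ca₂⟩ := exists_partials ha
  obtain ⟨b₁, b₂, hb₁, hb₂, cb₁, cb₂⟩ := exists_partials hb
  obtain ⟨A, A1, A2⟩ := duh_partials hF.continuous ha₁ ha₂ ca₁ ca₂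
  obtain ⟨B, B1, B2⟩ := duh_partials hF.continuous hb₁ hb₂ cb₁ cb₂
  refine ⟨(hF.comp contDiff_snd).add A, B, fun ξ η => ?_, fun ξ η => ?_⟩
  · refine ((A1 ξ η).const_add (F η)).congr_deriv ?_
    rw [duh, duh, ← intervalIntegral.integral_const_mul]
    refine intervalIntegral.integral_congr fun r _ => ?_
    rw [(ha₁ (ξ - r) (η - r)).unique (ha1 (ξ - r) (η - r)), sub_sub_sub_cancel_right]
    ring
  · refine (B2 ξ η).congr_deriv ?_
    rw [mul_add, duh, duh, ← intervalIntegral.integral_const_mul, hb0]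
    congr 1
    · ring
    refine intervalIntegral.integral_congr fun r _ => ?_
    rw [(hb₂ (ξ - r) (η - r)).unique (hb2 (ξ - r) (η - r)), sub_sub_sub_cancel_right]
    ring

/-! ### Splitting a Dirac field into right- and left-moving amplitudes -/

/-- In the basis `(1, i)`, `(1, -i)` of eigenvectors of `J` the Dirac equation becomes a transport
system. -/
lemma dirac_algebra (p q : ℝ → ℝ) (x : ℝ) (u ut ux : Fin 2 → ℂ) :
    I • ut + Jmat.mulVec ux + (Vmat p q x).mulVec u = 0 ↔
      ((ut 0 + ux 0) - I * (ut 1 + ux 1)) / 2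
          = I * conj ((p x : ℂ) + I * q x) * ((u 0 + I * u 1) / 2) ∧
      ((ut 0 - ux 0) + I * (ut 1 - ux 1)) / 2
          = I * ((p x : ℂ) + I * q x) * ((u 0 - I * u 1) / 2) := by
  have hI : I * I = -1 := I_mul_I
  have hconj : conj ((p x : ℂ) + I * q x) = p x - I * q x := by simp [sub_eq_add_neg]
  rw [hconj]
  have e : I • ut + Jmat.mulVec ux + (Vmat p q x).mulVec u = 0 ↔
      I * ut 0 + ux 1 + (p x * u 0 + q x * u 1) = 0 ∧
      I * ut 1 - ux 0 + (q x * u 0 - p x * u 1) = 0 := by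
    rw [funext_iff, Fin.forall_fin_two]
    simp [Jmat, Vmat, dotProduct, Fin.sum_univ_two, sub_eq_add_neg, Matrix.vecHead, Matrix.vecTail]
  rw [e]
  constructor
  · rintro ⟨h1, h2⟩
    constructor
    · linear_combination (-I / 2) * h1 - (1 / 2) * h2 +
        (ut 0 + I * q x * u 1 + q x * u 0 - p x * u 1) / 2 * hI
    · linear_combination (-I / 2) * h1 + (1 / 2) * h2 +
        (ut 0 + I * q x * u 1 + p x * u 1 - q x * u 0) / 2 * hI
  · rintro ⟨h1, h2⟩
    constructor
    · linear_combination I * h1 + I * h2 +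
        (ux 1 + p x * u 0 + q x * u 1 * (1 - I * I)) * hI
    · linear_combination -h1 + h2 + (q x * u 0 - p x * u 1) * hI

/-! ### Uniqueness -/

/-- Growth of a function along a segment of a characteristic, given an exponential bound for the
right-hand side of the transport equation. -/
lemma transport_bound {D : Set (ℝ × ℝ)} {α : ℝ × ℝ → ℂ} {α' : ℝ × ℝ → ℝ × ℝ →L[ℝ] ℂ}
    (hα : ∀ z ∈ D, HasFDerivWithinAt α (α' z) D z) {x σ s₀ t M L : ℝ} (hL : 0 < L)
    (hst : s₀ ≤ t) (hD : ∀ s ∈ Icc s₀ t, (x + σ * s, s) ∈ D)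
    (h0 : ‖α (x + σ * s₀, s₀)‖ ≤ M / L * Real.exp (L * s₀))
    (hb : ∀ s ∈ Icc s₀ t, ‖α' (x + σ * s, s) (σ, 1)‖ ≤ M * Real.exp (L * s)) :
    ‖α (x + σ * t, t)‖ ≤ M / L * Real.exp (L * t) := by
  have hpath : ∀ s ∈ Icc s₀ t, HasDerivWithinAt (fun s => α (x + σ * s, s))
      (α' (x + σ * s, s) (σ, 1)) (Icc s₀ t) s := by
    intro s hs
    have h1 : HasDerivAt (fun s : ℝ => (x + σ * s, s)) (σ, (1 : ℝ)) s := by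
      have := ((hasDerivAt_id s).const_mul σ).const_add x
      simp only [id, mul_one] at this
      exact this.prodMk (hasDerivAt_id s)
    exact HasFDerivWithinAt.comp_hasDerivWithinAt (f := fun s : ℝ => (x + σ * s, s)) s
      (hα _ (hD s hs)) h1.hasDerivWithinAt hD
  refine image_norm_le_of_norm_deriv_right_le_deriv_boundary
    (f := fun s => α (x + σ * s, s)) (f' := fun s => α' (x + σ * s, s) (σ, 1))
    (B := fun s => M / L * Real.exp (L * s)) (B' := fun s => M * Real.exp (L * s))
    (fun s hs => (hpath s hs).continuousWithinAt)
    (fun s hs => (hpath s (Ico_subset_Icc_self hs)).mono_of_mem_nhdsWithin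
      (Icc_mem_nhdsGE_of_mem hs)) h0 (fun s => ?_)
    (fun s hs => hb s (Ico_subset_Icc_self hs)) ⟨hst, le_rfl⟩
  have h1 : HasDerivAt (fun s : ℝ => L * s) L s := by
    simpa using (hasDerivAt_id s).const_mul L
  refine (h1.exp.const_mul (M / L)).congr_deriv ?_
  field_simp

/-- The homogeneous transport system has only the zero solution. On the domain of dependence
`x + t ≤ R` the supremum `N` of `e^{-Lt} max(|α|,|β|)` satisfies `N ≤ (C/L) N`, where `C` bounds
the coefficient; taking `L > C` gives `N = 0`. -/
lemma transport_unique {T : ℝ} {c : ℝ → ℂ} (hc : Continuous c) {α β : ℝ × ℝ → ℂ}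
    {α' β' : ℝ × ℝ → ℝ × ℝ →L[ℝ] ℂ}
    (hα : ∀ z ∈ PiT T, HasFDerivWithinAt α (α' z) (PiT T) z)
    (hβ : ∀ z ∈ PiT T, HasFDerivWithinAt β (β' z) (PiT T) z)
    (e₁ : ∀ z ∈ PiT T, α' z (1, 1) = I * conj (c z.1) * β z)
    (e₂ : ∀ z ∈ PiT T, β' z (-1, 1) = I * c z.1 * α z)
    (hα0 : ∀ x, 0 ≤ x → α (x, 0) = 0) (hβ0 : ∀ x, 0 ≤ x → β (x, 0) = 0)
    (hbd : ∀ t ∈ Icc (0 : ℝ) T, α (0, t) = -β (0, t)) :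
    ∀ z ∈ PiT T, α z = 0 ∧ β z = 0 := by
  rintro ⟨x₀, t₀⟩ ⟨hx₀, ht₀, ht₀T⟩
  dsimp only at hx₀ ht₀ ht₀T
  set R := x₀ + t₀ with hR
  set K : Set (ℝ × ℝ) := (Icc 0 R ×ˢ Icc 0 T) ∩ {z | z.1 + z.2 ≤ R} with hK
  have hKc : IsCompact K := (isCompact_Icc.prod isCompact_Icc).inter_right
    (isClosed_le (by fun_prop) continuous_const)
  have hKP : K ⊆ PiT T := fun z hz => ⟨hz.1.1.1, hz.1.2.1, hz.1.2.2⟩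
  have hmemK : ∀ x t : ℝ, 0 ≤ x → 0 ≤ t → t ≤ T → x + t ≤ R → (x, t) ∈ K :=
    fun x t h1 h2 h3 h4 => ⟨⟨⟨h1, by dsimp only; linarith⟩, h2, h3⟩, h4⟩
  obtain ⟨C, hC⟩ := (isCompact_Icc (a := 0) (b := R)).exists_bound_of_continuousOn hc.continuousOn
  have hC0 : 0 ≤ C := (norm_nonneg _).trans (hC 0 ⟨le_rfl, by positivity⟩)
  set L := C + 1 with hL
  have hL0 : 0 < L := by positivity
  have hαc : ContinuousOn α (PiT T) := fun z hz => (hα z hz).continuousWithinAt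
  have hβc : ContinuousOn β (PiT T) := fun z hz => (hβ z hz).continuousWithinAt
  have hg : ContinuousOn (fun z : ℝ × ℝ => Real.exp (-(L * z.2)) * max ‖α z‖ ‖β z‖) K :=
    (Continuous.continuousOn (by fun_prop)).mul
      ((hαc.mono hKP).norm.sup (hβc.mono hKP).norm)
  obtain ⟨⟨x₁, t₁⟩, hz₁, hmax⟩ := hKc.exists_isMaxOn
    ⟨(x₀, t₀), hmemK x₀ t₀ hx₀ ht₀ ht₀T le_rfl⟩ hg
  set N := Real.exp (-(L * t₁)) * max ‖α (x₁, t₁)‖ ‖β (x₁, t₁)‖ with hN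
  have hN0 : 0 ≤ N := by positivity
  have hle : ∀ z ∈ K, max ‖α z‖ ‖β z‖ ≤ N * Real.exp (L * z.2) := by
    intro z hz
    have h : Real.exp (-(L * z.2)) * max ‖α z‖ ‖β z‖ ≤ N := hmax hz
    rw [Real.exp_neg, inv_mul_le_iff₀ (Real.exp_pos _)] at h
    linarith
  have hsrc : ∀ z ∈ K, ∀ y : ℂ, ‖y‖ ≤ max ‖α z‖ ‖β z‖ → ∀ d : ℂ, ‖d‖ = ‖c z.1‖ →
      ‖I * d * y‖ ≤ C * N * Real.exp (L * z.2) := by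
    intro z hz y hy d hd
    rw [norm_mul, norm_mul, norm_I, one_mul, hd, mul_assoc]
    exact mul_le_mul (hC _ hz.1.1) (hy.trans (hle z hz)) (norm_nonneg _) hC0
  have hBβ : ∀ x t, (x, t) ∈ K → ‖β (x, t)‖ ≤ C * N / L * Real.exp (L * t) := by
    rintro x t ⟨⟨⟨hx, -⟩, ht, htT⟩, hxt⟩
    dsimp only at hx ht htT
    change x + t ≤ R at hxt
    have hin : ∀ s ∈ Icc 0 t, (x + t + -1 * s, s) ∈ K := fun s hs =>
      hmemK _ _ (by linarith [hs.2]) hs.1 (hs.2.trans htT) (by linarith)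
    have := transport_bound (x := x + t) (σ := -1) (M := C * N) hβ hL0 ht
      (fun s hs => hKP (hin s hs)) (by
        rw [hβ0 _ (by linarith), norm_zero]
        positivity)
      (fun s hs => by
        rw [e₂ _ (hKP (hin s hs))]
        exact hsrc _ (hin s hs) _ (le_max_left _ _) _ rfl)
    simpa using this
  have hBα : ∀ x t, (x, t) ∈ K → ‖α (x, t)‖ ≤ C * N / L * Real.exp (L * t) := by
    rintro x t ⟨⟨⟨hx, -⟩, ht, htT⟩, hxt⟩
    dsimp only at hx ht htT
    change x + t ≤ R at hxt
    have hin : ∀ s ∈ Icc (max 0 (t - x)) t, (x - t + 1 * s, s) ∈ K := fun s hs =>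
      hmemK _ _ (by linarith [(le_max_right 0 (t - x)).trans hs.1])
        ((le_max_left 0 (t - x)).trans hs.1) (hs.2.trans htT) (by linarith [hs.2])
    have := transport_bound (x := x - t) (σ := 1) (M := C * N) hα hL0
      (max_le ht (by linarith) : max 0 (t - x) ≤ t)
      (fun s hs => hKP (hin s hs)) (by
        rcases le_total (t - x) 0 with h | h
        · rw [max_eq_left h, hα0 _ (by linarith), norm_zero]
          positivity
        · rw [max_eq_right h, show x - t + 1 * (t - x) = 0 by ring,
            hbd _ ⟨h, by linarith⟩, norm_neg]
          exact hBβ 0 (t - x) (hmemK _ _ le_rfl h (by linarith) (by linarith)))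
      (fun s hs => by
        rw [e₁ _ (hKP (hin s hs))]
        exact hsrc _ (hin s hs) _ (le_max_right _ _) _ (RCLike.norm_conj _))
    simpa using this
  have hNle : N ≤ C * N / L := by
    have h := max_le (hBα _ _ hz₁) (hBβ _ _ hz₁)
    refine hN.le.trans ?_
    rwa [Real.exp_neg, inv_mul_le_iff₀ (Real.exp_pos _), mul_comm (Real.exp _)]
  have hN00 : N = 0 := by
    rw [le_div_iff₀ hL0, hL] at hNle
    nlinarith
  have := hle (x₀, t₀) (hmemK x₀ t₀ hx₀ ht₀ ht₀T le_rfl)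
  rw [hN00, zero_mul] at this
  exact ⟨norm_le_zero_iff.1 ((le_max_left _ _).trans this),
    norm_le_zero_iff.1 ((le_max_right _ _).trans this)⟩

/-- The field with right-moving amplitude `A` and left-moving amplitude `B`, both given in the
characteristic coordinates `ξ = t + x`, `η = t - x`. -/
def waveField (A B : ℝ → ℝ → ℂ) (z : ℝ × ℝ) : Fin 2 → ℂ :=
  A (z.2 + z.1) (z.2 - z.1) • ![1, I] + B (z.2 + z.1) (z.2 - z.1) • ![1, -I]

/-- The right-moving amplitude `(u₁ - i u₂) / 2`. -/
def ampR : (Fin 2 → ℂ) →L[ℝ] ℂ :=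
  (((1 / 2 : ℂ) • (ContinuousLinearMap.proj 0 - I • ContinuousLinearMap.proj 1) :
    (Fin 2 → ℂ) →L[ℂ] ℂ)).restrictScalars ℝ

/-- The left-moving amplitude `(u₁ + i u₂) / 2`. -/
def ampL : (Fin 2 → ℂ) →L[ℝ] ℂ :=
  (((1 / 2 : ℂ) • (ContinuousLinearMap.proj 0 + I • ContinuousLinearMap.proj 1) :
    (Fin 2 → ℂ) →L[ℂ] ℂ)).restrictScalars ℝ

lemma ampR_apply (u : Fin 2 → ℂ) : ampR u = (u 0 - I * u 1) / 2 := by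
  simp [ampR]; ring

lemma ampL_apply (u : Fin 2 → ℂ) : ampL u = (u 0 + I * u 1) / 2 := by
  simp [ampL]; ring

lemma ampR_waveField (A B : ℝ → ℝ → ℂ) (z : ℝ × ℝ) :
    ampR (waveField A B z) = A (z.2 + z.1) (z.2 - z.1) := by
  rw [ampR_apply]
  simp only [waveField, Pi.add_apply, Pi.smul_apply, smul_eq_mul, Matrix.cons_val_zero,
    Matrix.cons_val_one]
  linear_combination (B (z.2 + z.1) (z.2 - z.1) / 2 - A (z.2 + z.1) (z.2 - z.1) / 2) * I_mul_I

lemma ampL_waveField (A B : ℝ → ℝ → ℂ) (z : ℝ × ℝ) :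
    ampL (waveField A B z) = B (z.2 + z.1) (z.2 - z.1) := by
  rw [ampL_apply]
  simp only [waveField, Pi.add_apply, Pi.smul_apply, smul_eq_mul, Matrix.cons_val_zero,
    Matrix.cons_val_one]
  linear_combination (A (z.2 + z.1) (z.2 - z.1) / 2 - B (z.2 + z.1) (z.2 - z.1) / 2) * I_mul_I

lemma eq_zero_of_amp {u : Fin 2 → ℂ} (h1 : ampR u = 0) (h2 : ampL u = 0) : u = 0 := by
  rw [ampR_apply] at h1
  rw [ampL_apply] at h2
  have h0 : u 0 = 0 := by linear_combination h1 + h2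
  have h3 : u 1 = 0 := by linear_combination I * h1 - I * h2 + u 1 * I_mul_I
  rw [funext_iff, Fin.forall_fin_two]
  exact ⟨h0, h3⟩

/-- The Dirac equation as a transport system for the two amplitudes, in terms of the derivative `D`
of the field. -/
lemma dirac_iff_amp (p q : ℝ → ℝ) (x : ℝ) (u : Fin 2 → ℂ) (D : ℝ × ℝ →L[ℝ] Fin 2 → ℂ) :
    I • D (0, 1) + Jmat.mulVec (D (1, 0)) + (Vmat p q x).mulVec u = 0 ↔
      ampR (D (1, 1)) = I * conj ((p x : ℂ) + I * q x) * ampL u ∧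
      ampL (D (-1, 1)) = I * ((p x : ℂ) + I * q x) * ampR u := by
  have h1 : D (1, 1) = D (0, 1) + D (1, 0) := by rw [← map_add]; simp
  have h2 : D (-1, 1) = D (0, 1) - D (1, 0) := by rw [← map_sub]; simp
  rw [dirac_algebra, h1, h2, ampR_apply, ampR_apply, ampL_apply, ampL_apply]
  rfl

lemma contDiff_waveField {A B : ℝ → ℝ → ℂ} (hA : ContDiff ℝ 1 fun z : ℝ × ℝ => A z.1 z.2)
    (hB : ContDiff ℝ 1 fun z : ℝ × ℝ => B z.1 z.2) : ContDiff ℝ 1 (waveField A B) := by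
  have hchar : ContDiff ℝ 1 fun z : ℝ × ℝ => (z.2 + z.1, z.2 - z.1) := by fun_prop
  exact ((hA.comp hchar).smul contDiff_const).add ((hB.comp hchar).smul contDiff_const)

lemma uniqueDiffOn_PiT {T : ℝ} (hT : 0 < T) : UniqueDiffOn ℝ (PiT T) := by
  have : PiT T = Ici 0 ×ˢ Icc 0 T := rfl
  rw [this]
  exact (uniqueDiffOn_Ici 0).prod (uniqueDiffOn_Icc hT)

/-- A field whose amplitudes solve the transport system in characteristic coordinates solves the
Dirac equation; `∂ₜ + ∂ₓ = 2 ∂_ξ` and `∂ₜ - ∂ₓ = 2 ∂_η`. -/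
lemma diracOn_waveField {T : ℝ} (hT : 0 < T) {p q : ℝ → ℝ} {c : ℝ → ℂ}
    (hc : ∀ x, 0 ≤ x → c x = p x + I * q x) {A B : ℝ → ℝ → ℂ}
    (hA : ContDiff ℝ 1 fun z : ℝ × ℝ => A z.1 z.2) (hB : ContDiff ℝ 1 fun z : ℝ × ℝ => B z.1 z.2)
    (hA1 : ∀ ξ η, HasDerivAt (fun x => A x η) (I / 2 * conj (c ((ξ - η) / 2)) * B ξ η) ξ)
    (hB2 : ∀ ξ η, HasDerivAt (fun y => B ξ y) (I / 2 * c ((ξ - η) / 2) * A ξ η) η) :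
    DiracOn p q (PiT T) (waveField A B) := by
  rintro ⟨x, t⟩ hz
  have hd := (contDiff_waveField hA hB).differentiable one_ne_zero (x, t)
  have hx : ((t + x) - (t - x)) / 2 = x := by ring
  have line : ∀ σ : ℝ, HasDerivAt (fun s : ℝ => waveField A B (x + σ * s, t + s))
      (fderiv ℝ (waveField A B) (x, t) (σ, 1)) 0 := by
    intro σ
    have h1 : HasDerivAt (fun s : ℝ => (x + σ * s, t + s)) (σ, (1 : ℝ)) 0 := by
      have := ((hasDerivAt_id (0 : ℝ)).const_mul σ).const_add x
      simp only [id, mul_one] at this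
      exact this.prodMk ((hasDerivAt_id (0 : ℝ)).const_add t)
    have h2 : HasFDerivAt (waveField A B) (fderiv ℝ (waveField A B) (x, t)) (x + σ * 0, t + 0) := by
      simpa using hd.hasFDerivAt
    exact HasFDerivAt.comp_hasDerivAt (f := fun s : ℝ => (x + σ * s, t + s)) 0 h2 h1
  have sc : ∀ y : ℝ, HasDerivAt (fun s : ℝ => y + 2 * s) (2 : ℝ) 0 := fun y => by
    simpa using ((hasDerivAt_id (0 : ℝ)).const_mul 2).const_add y
  rw [fderivWithin_eq_fderiv (uniqueDiffOn_PiT hT _ hz) hd, dirac_iff_amp, ampL_waveField,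
    ampR_waveField, ← hc x hz.1]
  constructor
  · have h1 := ampR.hasFDerivAt.comp_hasDerivAt 0 (line 1)
    have h2 : HasDerivAt (fun s : ℝ => A (t + x + 2 * s) (t - x)) _ 0 :=
      HasDerivAt.scomp_of_eq (h := fun s : ℝ => t + x + 2 * s) 0 (hA1 (t + x) (t - x)) (sc (t + x))
        (by simp)
    have e : (ampR ∘ fun s : ℝ => waveField A B (x + 1 * s, t + s))
        = fun s : ℝ => A (t + x + 2 * s) (t - x) := by
      funext s
      rw [Function.comp_apply, ampR_waveField]
      congr 1 <;> ring
    rw [e] at h1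
    rw [h1.unique h2, hx, real_smul]
    push_cast
    ring
  · have h1 := ampL.hasFDerivAt.comp_hasDerivAt 0 (line (-1))
    have h2 : HasDerivAt (fun s : ℝ => B (t + x) (t - x + 2 * s)) _ 0 :=
      HasDerivAt.scomp_of_eq (h := fun s : ℝ => t - x + 2 * s) 0 (hB2 (t + x) (t - x)) (sc (t - x))
        (by simp)
    have e : (ampL ∘ fun s : ℝ => waveField A B (x + -1 * s, t + s))
        = fun s : ℝ => B (t + x) (t - x + 2 * s) := by
      funext s
      rw [Function.comp_apply, ampL_waveField]
      congr 1 <;> ring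
    rw [e] at h1
    rw [h1.unique h2, hx, real_smul]
    push_cast
    ring

/-! ### Data on the half-line and on `[0, T]` -/

/-- The complex potential `c = p + iq` extends to a `C¹` function on `ℝ`. -/
lemma exists_potential {p q : ℝ → ℝ} (hp : ContDiffOn ℝ 1 p (Ici 0))
    (hq : ContDiffOn ℝ 1 q (Ici 0)) :
    ∃ c : ℝ → ℂ, ContDiff ℝ 1 c ∧ ∀ x, 0 ≤ x → c x = p x + I * q x := by
  have hf : ContDiffOn ℝ 1 (fun x => (p x : ℂ) + I * q x) (Ici 0) :=
    (ofRealCLM.contDiff.comp_contDiffOn hp).add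
      (contDiffOn_const.mul (ofRealCLM.contDiff.comp_contDiffOn hq))
  obtain ⟨c, h1, h2, -⟩ := exists_C1_extension (convex_Ici 0) (uniqueDiffOn_Ici 0)
    (mem_Ici.2 le_rfl) (ρ := fun x => max 0 x) (by fun_prop)
    (fun x => mem_Ici.2 (le_max_left _ _))
    (fun x hx => max_eq_right hx) hf
  exact ⟨c, h1, h2⟩

/-- The two compatibility conditions at `0` are exactly what makes the extension by zero of a
control of class `C¹`. -/
lemma exists_control {T : ℝ} (hT : 0 < T) {f : ℝ → ℂ} (hneg : ∀ t < (0 : ℝ), f t = 0)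
    (hf : ContDiffOn ℝ 1 f (Icc 0 T)) (h0 : f 0 = 0) (h0' : derivWithin f (Icc 0 T) 0 = 0) :
    ∃ F : ℝ → ℂ, ContDiff ℝ 1 F ∧ (∀ x ≤ 0, F x = 0) ∧ ∀ x ≤ T, f x = F x := by
  obtain ⟨F, h1, h2, h3⟩ := exists_C1_extension (convex_Icc 0 T) (uniqueDiffOn_Icc hT)
    (left_mem_Icc.2 hT.le) (ρ := fun x => max 0 (min x T)) (by fun_prop)
    (fun x => ⟨le_max_left _ _, max_le hT.le (min_le_right _ _)⟩)
    (fun x hx => by rw [min_eq_left hx.2, max_eq_right hx.1]) hf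
  have hF : ∀ x ≤ 0, F x = 0 := by
    intro x hx
    rw [h3]
    dsimp only
    rw [h0, zero_add]
    refine (intervalIntegral.integral_congr (g := fun _ => (0 : ℂ)) fun s hs => ?_).trans
      intervalIntegral.integral_zero
    rw [uIcc_of_ge hx] at hs
    dsimp only
    rw [max_eq_left ((min_le_left _ _).trans hs.2), h0']
  refine ⟨F, h1, hF, fun x hx => ?_⟩
  rcases lt_or_ge x 0 with h | h
  · rw [hneg x h, hF x h.le]
  · exact (h2 x ⟨h, hx⟩).symm

/-! ### The Duhamel representation -/

lemma duh_eq_zero {F : ℝ → ℂ} (hF : ∀ x ≤ 0, F x = 0) (g : ℝ → ℝ → ℂ) {ξ η : ℝ} (hη : η ≤ 0) :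
    duh F g ξ η = 0 := by
  rw [duh]
  refine (intervalIntegral.integral_congr (g := fun _ => (0 : ℂ)) fun s hs => ?_).trans
    intervalIntegral.integral_zero
  rw [uIcc_of_ge hη] at hs
  dsimp only
  rw [hF s hs.2, zero_mul]

/-- Finite speed of propagation for the Duhamel representation. -/
lemma usol_of_lt {f : ℝ → ℂ} (hf : ∀ t ≤ (0 : ℝ), f t = 0) (w : ℝ × ℝ → Fin 2 → ℂ) {z : ℝ × ℝ}
    (hz : z.2 ≤ z.1) : usol f w z = 0 := by
  rw [usol, hf _ (by linarith), zero_smul, zero_add]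
  refine (intervalIntegral.integral_congr (g := fun _ => (0 : Fin 2 → ℂ)) fun s hs => ?_).trans
    intervalIntegral.integral_zero
  rw [uIcc_of_ge hz] at hs
  dsimp only
  rw [hf _ (by linarith [hs.1]), zero_smul]

/-- Substituting `s = t - r` turns the Duhamel representation into the superposition `duh` of the
Goursat kernels. -/
lemma usol_eq_waveField {T : ℝ} {f F : ℝ → ℂ} (hF : Continuous F) (hF0 : ∀ x ≤ 0, F x = 0)
    (hfF : ∀ x ≤ T, f x = F x) {a b : ℝ → ℝ → ℂ} (ha : Continuous fun z : ℝ × ℝ => a z.1 z.2)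
    (hb : Continuous fun z : ℝ × ℝ => b z.1 z.2) (hT : 0 ≤ T) {w : ℝ × ℝ → Fin 2 → ℂ}
    (hw : ∀ z : ℝ × ℝ, z.1 ≤ z.2 → w z = waveField a b z) {z : ℝ × ℝ} (hz : z ∈ PiT T) :
    usol f w z = waveField (fun ξ η => F η + duh F a ξ η) (duh F b) z := by
  obtain ⟨x, t⟩ := z
  obtain ⟨hx, ht, htT⟩ := hz
  dsimp only at hx ht htT
  rcases lt_or_ge t x with h | h
  · rw [usol_of_lt (fun s hs => (hfF s (hs.trans hT)).trans (hF0 s hs)) w h.le]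
    simp only [waveField]
    rw [hF0 _ (by linarith), duh_eq_zero hF0 _ (by linarith), duh_eq_zero hF0 _ (by linarith)]
    simp
  have e1 : ∫ s in x..t, f (t - s) • w (x, s)
      = ∫ s in x..t, (fun r => F r • waveField a b (x, t - r)) (t - s) := by
    refine intervalIntegral.integral_congr fun s hs => ?_
    rw [uIcc_of_le h] at hs
    dsimp only
    rw [hfF _ (by linarith [hs.1]), hw _ hs.1, sub_sub_cancel]
  have hc : ∀ {k : ℝ → ℝ → ℂ}, (Continuous fun z : ℝ × ℝ => k z.1 z.2) →
      ∀ e : Fin 2 → ℂ, IntervalIntegrable (fun r => (F r * k (t + x - r) (t - x - r)) • e) volume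
        0 (t - x) := fun hk e =>
    ((hF.mul (hk.comp (f := fun r : ℝ => (t + x - r, t - x - r)) (by fun_prop))).smul
      continuous_const).intervalIntegrable _ _
  have e2 : ∀ r, F r • waveField a b (x, t - r)
      = (F r * a (t + x - r) (t - x - r)) • ![1, I]
        + (F r * b (t + x - r) (t - x - r)) • ![1, -I] := by
    intro r
    rw [waveField, smul_add, smul_smul, smul_smul, sub_right_comm t r x,
      show t - r + x = t + x - r by ring]
  simp only [usol, waveField]
  rw [e1, intervalIntegral.integral_comp_sub_left (fun r => F r • waveField a b (x, t - r)),
    sub_self]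
  simp only [e2]
  rw [intervalIntegral.integral_add (hc ha _) (hc hb _),
    intervalIntegral.integral_smul_const, intervalIntegral.integral_smul_const, add_smul, add_assoc,
    hfF _ (by linarith)]
  rfl

/-- Uniqueness for the initial boundary value problem. -/
lemma dirac_unique {T : ℝ} {p q : ℝ → ℝ} {c : ℝ → ℂ} (hcc : Continuous c)
    (hc : ∀ x, 0 ≤ x → c x = p x + I * q x) {v u : ℝ × ℝ → Fin 2 → ℂ}
    (hv : ContDiffOn ℝ 1 v (PiT T)) (hu : ContDiffOn ℝ 1 u (PiT T))
    (hvD : DiracOn p q (PiT T) v) (huD : DiracOn p q (PiT T) u)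
    (h0 : ∀ x, 0 ≤ x → v (x, 0) = u (x, 0)) (hbd : ∀ t ∈ Icc (0 : ℝ) T, v (0, t) 0 = u (0, t) 0) :
    ∀ z ∈ PiT T, v z = u z := by
  have hd : ∀ z ∈ PiT T, HasFDerivWithinAt (fun z => v z - u z)
      (fderivWithin ℝ v (PiT T) z - fderivWithin ℝ u (PiT T) z) (PiT T) z := fun z hz =>
    (hv.differentiableOn one_ne_zero z hz).hasFDerivWithinAt.sub
      (hu.differentiableOn one_ne_zero z hz).hasFDerivWithinAt
  have hD : ∀ z ∈ PiT T, _ := fun z hz => (dirac_iff_amp p q z.1 (v z - u z)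
      (fderivWithin ℝ v (PiT T) z - fderivWithin ℝ u (PiT T) z)).1 (by
    simp only [_root_.sub_apply, Matrix.mulVec_sub, smul_sub]
    linear_combination hvD z hz - huD z hz)
  have key := transport_unique (T := T) hcc
    (α := fun z => ampR (v z - u z)) (β := fun z => ampL (v z - u z))
    (fun z hz => ampR.hasFDerivAt.comp_hasFDerivWithinAt z (hd z hz))
    (fun z hz => ampL.hasFDerivAt.comp_hasFDerivWithinAt z (hd z hz))
    (fun z hz => by rw [hc _ hz.1]; exact (hD z hz).1)
    (fun z hz => by rw [hc _ hz.1]; exact (hD z hz).2)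
    (fun x hx => by rw [h0 x hx, sub_self, map_zero])
    (fun x hx => by rw [h0 x hx, sub_self, map_zero])
    (fun t ht => by
      have : (v (0, t) - u (0, t)) 0 = 0 := by rw [Pi.sub_apply, hbd t ht, sub_self]
      rw [ampR_apply, ampL_apply, this]
      ring)
  exact fun z hz => sub_eq_zero.1 (eq_zero_of_amp (key z hz).1 (key z hz).2)

end Auxiliary

/-- Existence of the kernel `w` and well-posedness of the forward problem
for the Dirac system on `Π^T`, with the Duhamel representation of the unique
classical solution. -/
theorem stmt0 (T : ℝ) (hT : 0 < T) (p q : ℝ → ℝ)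
    (hp : ContDiffOn ℝ 1 p (Ici 0)) (hq : ContDiffOn ℝ 1 q (Ici 0)) :
    ∃ w : ℝ × ℝ → Fin 2 → ℂ,
      (∀ z : ℝ × ℝ, z.2 < z.1 → w z = 0) ∧
      ContDiffOn ℝ 1 w (DeltaT T) ∧
      (∀ t ∈ Icc (0 : ℝ) T, w (0, t) 0 = 0) ∧
      ∀ f : ℝ → ℂ, (∀ t < (0 : ℝ), f t = 0) →
        ContDiffOn ℝ 1 f (Icc 0 T) → f 0 = 0 → derivWithin f (Icc 0 T) 0 = 0 →
        (ContDiffOn ℝ 1 (usol f w) (PiT T) ∧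
          DiracOn p q (PiT T) (usol f w) ∧
          (∀ x : ℝ, 0 ≤ x → usol f w (x, 0) = 0) ∧
          (∀ t ∈ Icc (0 : ℝ) T, usol f w (0, t) 0 = f t) ∧
          (∀ z ∈ PiT T, z.2 < z.1 → usol f w z = 0) ∧
          (∀ v : ℝ × ℝ → Fin 2 → ℂ, ContDiffOn ℝ 1 v (PiT T) →
            DiracOn p q (PiT T) v →
            (∀ x : ℝ, 0 ≤ x → v (x, 0) = 0) →
            (∀ t ∈ Icc (0 : ℝ) T, v (0, t) 0 = f t) →
            ∀ z ∈ PiT T, v z = usol f w z)) := by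
  obtain ⟨c, hc, hcpq⟩ := exists_potential hp hq
  obtain ⟨a, b, ha, hb, ha1, hb2, hab, hb0⟩ := exists_goursat hc
  set w : ℝ × ℝ → Fin 2 → ℂ := fun z => if z.2 < z.1 then 0 else waveField a b z with hw
  have hwW : ∀ z : ℝ × ℝ, z.1 ≤ z.2 → w z = waveField a b z := fun z hz => if_neg hz.not_gt
  refine ⟨w, fun z hz => if_pos hz, ?_, fun t ht => ?_, fun f hneg hf hf0 hf0' => ?_⟩
  · exact (contDiff_waveField ha hb).contDiffOn.congr fun z hz => hwW z hz.2.1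
  · rw [hwW _ ht.1]
    simp [waveField, hab]
  obtain ⟨F, hF, hF0, hfF⟩ := exists_control hT hneg hf hf0 hf0'
  have hfz : ∀ t ≤ (0 : ℝ), f t = 0 := fun t ht => (hfF t (ht.trans hT.le)).trans (hF0 t ht)
  obtain ⟨hA, hB, hA1, hB2⟩ := duhamel ha hb ha1 hb2 hb0 hF
  have heq : ∀ z ∈ PiT T,
      usol f w z = waveField (fun ξ η => F η + duh F a ξ η) (duh F b) z := fun z hz =>
    usol_eq_waveField hF.continuous hF0 hfF ha.continuous hb.continuous hT.le hwW hz
  have hC : ContDiffOn ℝ 1 (usol f w) (PiT T) :=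
    (contDiff_waveField hA hB).contDiffOn.congr heq
  have hD : DiracOn p q (PiT T) (usol f w) := by
    intro z hz
    rw [fderivWithin_congr heq (heq z hz), heq z hz]
    exact diracOn_waveField hT hcpq hA hB hA1 hB2 z hz
  have hI : ∀ x : ℝ, 0 ≤ x → usol f w (x, 0) = 0 := fun x hx => usol_of_lt hfz w hx
  have hR : ∀ t ∈ Icc (0 : ℝ) T, usol f w (0, t) 0 = f t := by
    intro t ht
    -- on the boundary `ξ = η` the two Duhamel integrals cancel because `a = -b` there
    have hcan : duh F a t t = -duh F b t t := by
      rw [duh, duh, ← intervalIntegral.integral_neg]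
      exact intervalIntegral.integral_congr fun r _ => by
        rw [hab, mul_neg]
    rw [heq _ ⟨le_rfl, ht.1, ht.2⟩, hfF t ht.2]
    simp [waveField, hcan]
  exact ⟨hC, hD, hI, hR, fun z _ hz => usol_of_lt hfz w hz.le, fun v hv hvD hv0 hvf =>
    dirac_unique hc.continuous hcpq hv hC hvD hD (fun x hx => by rw [hv0 x hx, hI x hx])
      fun t ht => by rw [hvf t ht, hR t ht]⟩
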